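/- Parametric objective monotonicity implies nestedness for set minimizers: Let V be a finite set and for each λ ∈ ℝ let g_λ : 𝒫(V) → ℝ be defined by g_λ(S) = f(S) − λ·h(S) where f : 𝒫(V) → ℝ is submodular and h : 𝒫(V) → ℝ is monotone non-decreasing (h(S) ≤ h(T) whenever S ⊆ T) and modular (h(S∪T)+h(S∩T)=h(S)+h(T)). If λ₁ < λ₂, S₁ minimizes g_{λ₁}, and S₂ minimizes g_{λ₂}, then S₁ ∩ S₂ minimizes g_{λ₁} and S₁ ∪ S₂ minimizes g_{λ₂}. -/

import Mathlib

/-- Parametric minimizers are lattice-compatible: for a submodular `f` and a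
monotone modular `h`, if λ₁ < λ₂, `S₁` minimizes `f − λ₁·h` and `S₂` minimizes
`f − λ₂·h`, then `S₁ ∩ S₂` minimizes `f − λ₁·h` and `S₁ ∪ S₂` minimizes
`f − λ₂·h`. -/
theorem parametric_lattice_minimizers {V : Type*} [Fintype V] [DecidableEq V]
    (f h : Finset V → ℝ)
    (hsub : ∀ S T : Finset V, f (S ∪ T) + f (S ∩ T) ≤ f S + f T)
    (hmono : ∀ S T : Finset V, S ⊆ T → h S ≤ h T)
    (hmod : ∀ S T : Finset V, h (S ∪ T) + h (S ∩ T) = h S + h T)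
    (lam₁ lam₂ : ℝ) (hlam : lam₁ < lam₂)
    (S₁ S₂ : Finset V)
    (hS₁ : ∀ S : Finset V, f S₁ - lam₁ * h S₁ ≤ f S - lam₁ * h S)
    (hS₂ : ∀ S : Finset V, f S₂ - lam₂ * h S₂ ≤ f S - lam₂ * h S) :
    (∀ S : Finset V, f (S₁ ∩ S₂) - lam₁ * h (S₁ ∩ S₂) ≤ f S - lam₁ * h S)
    ∧ (∀ S : Finset V, f (S₁ ∪ S₂) - lam₂ * h (S₁ ∪ S₂) ≤ f S - lam₂ * h S) := by
  have hprod : 0 ≤ (lam₂ - lam₁) * (h (S₁ ∪ S₂) - h S₂) :=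
    mul_nonneg (sub_nonneg.2 hlam.le) (sub_nonneg.2 (hmono _ _ Finset.subset_union_right))
  have hinter : h (S₁ ∩ S₂) = h S₁ + h S₂ - h (S₁ ∪ S₂) := by linarith [hmod S₁ S₂]
  have hexchange : (f (S₁ ∩ S₂) - lam₁ * h (S₁ ∩ S₂)) + (f (S₁ ∪ S₂) - lam₂ * h (S₁ ∪ S₂)) ≤
      (f S₁ - lam₁ * h S₁) + (f S₂ - lam₂ * h S₂) := by
    rw [hinter]
    linarith [hsub S₁ S₂]
  exact ⟨fun S => by linarith [hS₁ S, hS₂ (S₁ ∪ S₂)],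
    fun S => by linarith [hS₂ S, hS₁ (S₁ ∩ S₂)]⟩
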